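/- Define S(z) = Σ_{h < z, h even} (1/h)·∏_{p | h, p > 2}(1 + 1/(p − 2)) for z ≥ 2 (and S(z) = 0 for 1 ≤ z < 2), the product over odd prime divisors of h being 1 when empty. Then S(z) = (1 + o(1))·(1/(2𝔖))·log z as z → ∞; that is, for every ε > 0 there exists z₀ such that |S(z) − log z/(2𝔖)| ≤ ε·log z for all z ≥ z₀. -/

import Mathlib

open Real Finset

attribute [local instance] Classical.propDecidable

/-- The twin-prime constant `𝔖 = ∏_{p > 2 prime} (1 − 1/(p−1)²)`. -/
noncomputable def twinConst : ℝ :=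
  ∏' p : Nat.Primes, if 2 < (p : ℕ) then 1 - 1 / ((p : ℕ) - 1 : ℝ) ^ 2 else 1

/-- `S z = Σ_{h < z, h even} (1/h)·∏_{p ∣ h, p > 2}(1 + 1/(p − 2))`
(which vanishes for `z < 2`). -/
noncomputable def S (z : ℝ) : ℝ :=
  ∑ h ∈ (Finset.range (⌈z⌉₊ + 1)).filter
      (fun h : ℕ => 2 ∣ h ∧ 0 < h ∧ (h : ℝ) < z),
    (1 / (h : ℝ)) * ∏ p ∈ h.primeFactors.filter (fun p => 2 < p), (1 + 1 / ((p : ℝ) - 2))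

/-! The function `n ↦ ∏ p ∣ n, (1 + w p)` is the Dirichlet convolution of `1` with a function `g`
supported on the squarefree integers, so its sum over `n ≤ N` weighted by `1 / n` equals
`∑ d, harmonic (N / d) * (g d / d)`. After division by `log N` the harmonic weights are bounded and
tend to `1`, so dominated convergence gives the limit `∑ d, g d / d`, which is the Euler product of
`1 + w p / p`. When `1 + w p = 1 + 1 / (p - 2)` for `p > 2`, the Euler factor is
`(p - 1) ^ 2 / (p * (p - 2))`, the inverse of `1 - 1 / (p - 1) ^ 2`. Writing `h = 2 * m` accounts
for the remaining factor `1 / 2`. -/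

open Filter Asymptotics Topology

section DivisorSums

theorem sum_Ioc_filter_dvd {M : Type*} [AddCommMonoid M] {d : ℕ} (hd : d ≠ 0) (N : ℕ)
    (f : ℕ → M) :
    ∑ n ∈ Ioc 0 N with d ∣ n, f n = ∑ m ∈ Ioc 0 (N / d), f (d * m) := by
  have hpos : 0 < d := hd.pos
  refine Finset.sum_nbij' (· / d) (d * ·) ?_ ?_ ?_ ?_ ?_
  · simp only [mem_filter, mem_Ioc]
    rintro n ⟨⟨hn, hnN⟩, hdn⟩
    exact ⟨Nat.div_pos (Nat.le_of_dvd hn hdn) hpos, Nat.div_le_div_right hnN⟩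
  · simp only [mem_filter, mem_Ioc]
    rintro m ⟨hm, hmN⟩
    exact ⟨⟨Nat.mul_pos hpos hm, (Nat.mul_le_mul_left d hmN).trans (Nat.mul_div_le N d)⟩,
      dvd_mul_right d m⟩
  · intro n hn
    exact Nat.mul_div_cancel' (mem_filter.1 hn).2
  · intro m _
    exact Nat.mul_div_cancel_left m hpos
  · intro n hn
    rw [Nat.mul_div_cancel' (mem_filter.1 hn).2]

theorem sum_Ioc_inv (K : Type*) [DivisionRing K] [CharZero K] (N : ℕ) :
    ∑ m ∈ Ioc 0 N, (m : K)⁻¹ = harmonic N := by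
  rw [harmonic_eq_sum_Icc]
  push_cast
  rfl

theorem sum_inv_smul_sum_divisors {K E : Type*} [Field K] [CharZero K] [AddCommGroup E]
    [Module K E] (g : ℕ → E) (N : ℕ) :
    ∑ n ∈ Ioc 0 N, (n : K)⁻¹ • ∑ d ∈ n.divisors, g d =
      ∑ d ∈ Ioc 0 N, (harmonic (N / d) : K) • (d : K)⁻¹ • g d := by
  calc ∑ n ∈ Ioc 0 N, (n : K)⁻¹ • ∑ d ∈ n.divisors, g d
      = ∑ d ∈ Ioc 0 N, ∑ n ∈ Ioc 0 N with d ∣ n, (n : K)⁻¹ • g d := by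
        simp_rw [smul_sum]
        refine sum_comm' fun n d ↦ ?_
        simp only [mem_Ioc, Nat.mem_divisors, mem_filter]
        constructor
        · rintro ⟨⟨hn, hnN⟩, hdn, -⟩
          have hd := Nat.pos_of_dvd_of_pos hdn hn
          exact ⟨⟨⟨hn, hnN⟩, hdn⟩, hd, (Nat.le_of_dvd hn hdn).trans hnN⟩
        · rintro ⟨⟨⟨hn, hnN⟩, hdn⟩, -⟩
          exact ⟨⟨hn, hnN⟩, hdn, hn.ne'⟩
    _ = ∑ d ∈ Ioc 0 N, (harmonic (N / d) : K) • (d : K)⁻¹ • g d := by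
        refine sum_congr rfl fun d hd ↦ ?_
        rw [sum_Ioc_filter_dvd (mem_Ioc.1 hd).1.ne', ← sum_Ioc_inv, smul_smul, sum_mul, sum_smul]
        exact sum_congr rfl fun m _ ↦ by rw [Nat.cast_mul, mul_inv_rev]

end DivisorSums

section LogAsymptotics

theorem isEquivalent_log_of_tendsto_div {α : Type*} {l : Filter α} {u v : α → ℝ} {c : ℝ}
    (hc : c ≠ 0) (huv : Tendsto (fun x ↦ u x / v x) l (𝓝 c)) (hv : Tendsto v l atTop) :
    (fun x ↦ log (u x)) ~[l] fun x ↦ log (v x) := by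
  have hlog : Tendsto (fun x ↦ log (u x) - log (v x)) l (𝓝 (log c)) := by
    refine (huv.log hc).congr' ?_
    filter_upwards [huv.eventually_ne hc] with x hx
    obtain ⟨hux, hvx⟩ := div_ne_zero_iff.1 hx
    exact log_div hux hvx
  have hone : (fun _ ↦ (1 : ℝ)) =o[l] fun x ↦ log (v x) :=
    (isLittleO_const_log_atTop (c := 1)).comp_tendsto hv
  exact (hlog.isBigO_one ℝ).trans_isLittleO hone

theorem isEquivalent_log_natCast_div {d : ℕ} (hd : d ≠ 0) :
    (fun N : ℕ ↦ log (N / d : ℕ)) ~[atTop] fun N : ℕ ↦ log N := by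
  have hd' : (d : ℝ)⁻¹ ≠ 0 := inv_ne_zero (Nat.cast_ne_zero.2 hd)
  refine isEquivalent_log_of_tendsto_div hd' ?_ tendsto_natCast_atTop_atTop
  refine ((tendsto_nat_floor_mul_div_atTop (inv_nonneg.2 d.cast_nonneg)).comp
    tendsto_natCast_atTop_atTop).congr fun N ↦ ?_
  rw [Function.comp_apply, inv_mul_eq_div, Nat.floor_div_eq_div]

theorem isEquivalent_log_natCeil_sub_one :
    (fun z : ℝ ↦ log (⌈z⌉₊ - 1 : ℕ)) ~[atTop] log := by
  refine isEquivalent_log_of_tendsto_div one_ne_zero ?_ tendsto_id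
  have h : Tendsto (fun z : ℝ ↦ (⌈z⌉₊ : ℝ) / z - z⁻¹) atTop (𝓝 (1 - 0)) :=
    tendsto_nat_ceil_div_atTop.sub tendsto_inv_atTop_zero
  rw [sub_zero] at h
  refine h.congr' ?_
  filter_upwards [eventually_gt_atTop 0] with z hz
  rw [Nat.cast_pred (Nat.ceil_pos.2 hz), sub_div, one_div]

theorem isEquivalent_harmonic_log :
    (fun n : ℕ ↦ (harmonic n : ℝ)) ~[atTop] fun n : ℕ ↦ log n :=
  (tendsto_harmonic_sub_log.isBigO_one ℝ).trans_isLittleO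
    ((isLittleO_const_log_atTop (c := 1)).comp_tendsto tendsto_natCast_atTop_atTop)

theorem tendsto_harmonic_natDiv_div_log {d : ℕ} (hd : d ≠ 0) :
    Tendsto (fun N : ℕ ↦ (harmonic (N / d) : ℝ) / log N) atTop (𝓝 1) := by
  have hlog : ∀ᶠ N : ℕ in atTop, log N ≠ 0 :=
    (tendsto_log_atTop.comp tendsto_natCast_atTop_atTop).eventually_ne_atTop 0
  refine (isEquivalent_iff_tendsto_one hlog).1 ?_
  exact (isEquivalent_harmonic_log.comp_tendsto (Nat.tendsto_div_const_atTop hd)).trans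
    (isEquivalent_log_natCast_div hd)

theorem harmonic_natDiv_le_one_add_log (N d : ℕ) : (harmonic (N / d) : ℝ) ≤ 1 + log N := by
  refine (harmonic_le_one_add_log _).trans (add_le_add_right ?_ 1)
  rcases (N / d).eq_zero_or_pos with h | h
  · simpa [h] using log_natCast_nonneg N
  · exact log_le_log (Nat.cast_pos.2 h) (Nat.cast_le.2 (Nat.div_le_self N d))

theorem eventually_norm_harmonic_natDiv_div_log_le_two :
    ∀ᶠ N : ℕ in atTop, ∀ d : ℕ, ‖(harmonic (N / d) : ℝ) / log N‖ ≤ 2 := by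
  filter_upwards [(tendsto_log_atTop.comp tendsto_natCast_atTop_atTop).eventually_ge_atTop 1]
    with N hN d
  simp only [Function.comp_apply] at hN
  have hnonneg : (0 : ℝ) ≤ harmonic (N / d) := by
    rw [← sum_Ioc_inv]
    positivity
  rw [norm_of_nonneg (by positivity), div_le_iff₀ (by positivity)]
  linarith [harmonic_natDiv_le_one_add_log N d]

end LogAsymptotics

-- The junk value `(0 : ℝ)⁻¹ = 0` removes the term `d = 0` from the series.
theorem tendsto_logMean_sum_divisors {E : Type*} [NormedAddCommGroup E] [NormedSpace ℝ E]
    [CompleteSpace E] {g : ℕ → E} (hg : Summable fun d : ℕ ↦ ‖(d : ℝ)⁻¹ • g d‖) :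
    Tendsto (fun N : ℕ ↦ (log N)⁻¹ • ∑ n ∈ Ioc 0 N, (n : ℝ)⁻¹ • ∑ d ∈ n.divisors, g d) atTop
      (𝓝 (∑' d : ℕ, (d : ℝ)⁻¹ • g d)) := by
  have htsum (N : ℕ) : (log N)⁻¹ • ∑ n ∈ Ioc 0 N, (n : ℝ)⁻¹ • ∑ d ∈ n.divisors, g d =
      ∑' d : ℕ, ((harmonic (N / d) : ℝ) / log N) • (d : ℝ)⁻¹ • g d := by
    rw [sum_inv_smul_sum_divisors, smul_sum, tsum_eq_sum (s := Ioc 0 N)]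
    · exact sum_congr rfl fun d _ ↦ by rw [smul_smul, div_eq_inv_mul]
    · intro d hd
      rcases d.eq_zero_or_pos with rfl | hpos
      · simp
      · have hN : N / d = 0 := Nat.div_eq_of_lt (by simpa [hpos] using hd)
        simp [hN]
  simp_rw [htsum]
  refine tendsto_tsum_of_dominated_convergence (hg.mul_left 2) (fun d ↦ ?_) ?_
  · rcases eq_or_ne d 0 with rfl | hd
    · simp
    · simpa using (tendsto_harmonic_natDiv_div_log hd).smul_const ((d : ℝ)⁻¹ • g d)
  · filter_upwards [eventually_norm_harmonic_natDiv_div_log_le_two] with N hN d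
    rw [norm_smul]
    gcongr
    exact hN d

section SquarefreeProd

/-- The multiplicative function supported on the squarefree integers with value `w p` at each
prime `p`: its Dirichlet convolution with the constant `1` is `n ↦ ∏ p ∣ n, (1 + w p)`. -/
noncomputable def squarefreeProd {R : Type*} [CommMonoidWithZero R] (w : ℕ → R) (d : ℕ) : R :=
  if Squarefree d then ∏ p ∈ d.primeFactors, w p else 0

theorem sum_divisors_squarefreeProd {R : Type*} [CommSemiring R] (w : ℕ → R) {n : ℕ}
    (hn : n ≠ 0) :
    ∑ d ∈ n.divisors, squarefreeProd w d = ∏ p ∈ n.primeFactors, (1 + w p) := by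
  simp_rw [squarefreeProd]
  rw [← sum_filter, Nat.sum_divisors_filter_squarefree hn, Nat.factors_eq, prod_one_add]
  refine sum_congr rfl fun t ht ↦ ?_
  congr 1
  rw [prod_val]
  exact Nat.primeFactors_prod fun p hp ↦ Nat.prime_of_mem_primeFactors (mem_powerset.1 ht hp)

/-- The product of a finite set of primes, which parametrises the squarefree integers so that a sum
of `squarefreeProd` over them becomes an expanded Euler product. -/
def primesProd (s : Finset Nat.Primes) : ℕ := ∏ p ∈ s, (p : ℕ)

theorem squarefree_primesProd (s : Finset Nat.Primes) : Squarefree (primesProd s) :=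
  squarefree_prod_of_pairwise_isCoprime
    (fun p _ q _ hpq ↦ Nat.coprime_iff_isRelPrime.1 <|
      (Nat.coprime_primes p.2 q.2).2 (Nat.Primes.coe_nat_injective.ne hpq))
    fun p _ ↦ p.2.prime.squarefree

theorem primeFactors_primesProd (s : Finset Nat.Primes) :
    (primesProd s).primeFactors = s.map ⟨(↑), Nat.Primes.coe_nat_injective⟩ := by
  have hprod : primesProd s = ∏ p ∈ s.map ⟨(↑), Nat.Primes.coe_nat_injective⟩, p := by
    rw [prod_map]
    rfl
  rw [hprod, Nat.primeFactors_prod]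
  simp only [Finset.mem_map]
  rintro _ ⟨p, -, rfl⟩
  exact p.2

theorem primesProd_injective : Function.Injective primesProd := fun s t hst ↦
  map_injective _ <| by rw [← primeFactors_primesProd, ← primeFactors_primesProd, hst]

theorem mem_range_primesProd_of_squarefree {d : ℕ} (hd : Squarefree d) :
    d ∈ Set.range primesProd :=
  ⟨d.primeFactors.subtype Nat.Prime,
    (prod_subtype_of_mem id fun _ ↦ Nat.prime_of_mem_primeFactors).trans
      (Nat.prod_primeFactors_of_squarefree hd)⟩

theorem inv_smul_squarefreeProd_primesProd {K R : Type*} [Field K] [CommSemiring R] [Algebra K R]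
    (w : ℕ → R) (s : Finset Nat.Primes) :
    (primesProd s : K)⁻¹ • squarefreeProd w (primesProd s) = ∏ p ∈ s, ((p : ℕ) : K)⁻¹ • w p := by
  rw [squarefreeProd, if_pos (squarefree_primesProd s), primeFactors_primesProd, prod_map,
    primesProd, Nat.cast_prod, ← prod_inv_distrib, ← prod_smul]
  rfl

theorem inv_smul_squarefreeProd_eq_zero {K R : Type*} [Field K] [CommSemiring R]
    [Algebra K R] (w : ℕ → R) {d : ℕ} (hd : d ∉ Set.range primesProd) :
    (d : K)⁻¹ • squarefreeProd w d = 0 := by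
  rw [squarefreeProd, if_neg (mt mem_range_primesProd_of_squarefree hd), smul_zero]

variable {R : Type*} [NormedCommRing R] [NormOneClass R] [NormedAlgebra ℝ R] {w : ℕ → R}

theorem summable_norm_inv_smul_squarefreeProd
    (hw : Summable fun p : Nat.Primes ↦ ‖((p : ℕ) : ℝ)⁻¹ • w p‖) :
    Summable fun d : ℕ ↦ ‖(d : ℝ)⁻¹ • squarefreeProd w d‖ := by
  refine (primesProd_injective.summable_iff fun d hd ↦ ?_).1 ?_
  · rw [inv_smul_squarefreeProd_eq_zero w hd, norm_zero]
  · refine (summable_finsetProd_of_summable_nonneg (fun _ ↦ norm_nonneg _) hw).of_nonneg_of_le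
      (fun _ ↦ norm_nonneg _) fun s ↦ ?_
    rw [Function.comp_apply, inv_smul_squarefreeProd_primesProd]
    exact Finset.norm_prod_le _ _

theorem tsum_inv_smul_squarefreeProd [CompleteSpace R]
    (hw : Summable fun p : Nat.Primes ↦ ‖((p : ℕ) : ℝ)⁻¹ • w p‖) :
    ∑' d : ℕ, (d : ℝ)⁻¹ • squarefreeProd w d =
      ∏' p : Nat.Primes, (1 + ((p : ℕ) : ℝ)⁻¹ • w p) := by
  rw [tprod_one_add (summable_finsetProd_of_summable_norm hw), ← primesProd_injective.tsum_eq]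
  · exact tsum_congr fun s ↦ inv_smul_squarefreeProd_primesProd w s
  · exact Function.support_subset_iff'.2 fun d ↦ inv_smul_squarefreeProd_eq_zero w

end SquarefreeProd

theorem tendsto_logMean_prod_one_add {R : Type*} [NormedCommRing R] [NormOneClass R]
    [NormedAlgebra ℝ R] [CompleteSpace R] {w : ℕ → R}
    (hw : Summable fun p : Nat.Primes ↦ ‖((p : ℕ) : ℝ)⁻¹ • w p‖) :
    Tendsto (fun N : ℕ ↦ (log N)⁻¹ • ∑ n ∈ Ioc 0 N, (n : ℝ)⁻¹ • ∏ p ∈ n.primeFactors, (1 + w p))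
      atTop (𝓝 (∏' p : Nat.Primes, (1 + ((p : ℕ) : ℝ)⁻¹ • w p))) := by
  rw [← tsum_inv_smul_squarefreeProd hw]
  have hmean := tendsto_logMean_sum_divisors (g := squarefreeProd w)
    (summable_norm_inv_smul_squarefreeProd hw)
  refine hmean.congr fun N ↦ congrArg ((log N)⁻¹ • ·) ?_
  exact sum_congr rfl fun n hn ↦ by rw [sum_divisors_squarefreeProd w (mem_Ioc.1 hn).1.ne']

section TwinPrimes

/-- The weight of a prime in `S`: each prime factor `p` of `h` contributes `1 + oddPrimeWeight p`,
with the excluded prime `2` contributing the factor `1`. -/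
noncomputable def oddPrimeWeight (p : ℕ) : ℝ := if 2 < p then 1 / ((p : ℝ) - 2) else 0

theorem oddPrimeWeight_nonneg (p : ℕ) : 0 ≤ oddPrimeWeight p := by
  rw [oddPrimeWeight]
  split_ifs with hp
  · have : (2 : ℝ) < p := by exact_mod_cast hp
    exact one_div_nonneg.2 (by linarith)
  · exact le_rfl

theorem oddPrimeWeight_le (p : ℕ) : oddPrimeWeight p ≤ 3 / p := by
  rw [oddPrimeWeight]
  split_ifs with hp
  · have : (3 : ℝ) ≤ p := by exact_mod_cast hp
    rw [div_le_div_iff₀ (by linarith) (by linarith)]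
    linarith
  · positivity

theorem summable_inv_smul_oddPrimeWeight :
    Summable fun p : Nat.Primes ↦ ‖((p : ℕ) : ℝ)⁻¹ • oddPrimeWeight p‖ := by
  have hbound (p : ℕ) : ‖(p : ℝ)⁻¹ • oddPrimeWeight p‖ ≤ 3 * (1 / (p : ℝ) ^ 2) := by
    have hnonneg := mul_nonneg (inv_nonneg.2 p.cast_nonneg) (oddPrimeWeight_nonneg p)
    rw [smul_eq_mul, norm_of_nonneg hnonneg]
    calc (p : ℝ)⁻¹ * oddPrimeWeight p ≤ (p : ℝ)⁻¹ * (3 / p) := by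
          gcongr
          exact oddPrimeWeight_le p
      _ = 3 * (1 / (p : ℝ) ^ 2) := by ring
  exact (((summable_one_div_nat_pow.2 one_lt_two).mul_left 3).of_nonneg_of_le
    (fun _ ↦ norm_nonneg _) hbound).comp_injective Nat.Primes.coe_nat_injective

theorem inv_one_add_inv_smul_oddPrimeWeight (p : ℕ) :
    (1 + (p : ℝ)⁻¹ • oddPrimeWeight p)⁻¹ = if 2 < p then 1 - 1 / ((p : ℝ) - 1) ^ 2 else 1 := by
  rw [oddPrimeWeight]
  split_ifs with hp
  · have hp' : (2 : ℝ) < p := by exact_mod_cast hp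
    have h0 : (p : ℝ) ≠ 0 := by linarith
    have h1 : (p : ℝ) - 1 ≠ 0 := by linarith
    have h2 : (p : ℝ) - 2 ≠ 0 := by linarith
    have h : 1 + (p : ℝ)⁻¹ • (1 / ((p : ℝ) - 2)) = ((p : ℝ) - 1) ^ 2 / (p * (p - 2)) := by
      rw [smul_eq_mul]
      field_simp
      ring
    rw [h, inv_div]
    field_simp
    ring
  · simp

theorem tprod_one_add_oddPrimeWeight :
    ∏' p : Nat.Primes, (1 + ((p : ℕ) : ℝ)⁻¹ • oddPrimeWeight p) = twinConst⁻¹ := by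
  have hmul := multipliable_one_add_of_summable summable_inv_smul_oddPrimeWeight
  have hne : ∏' p : Nat.Primes, (1 + ((p : ℕ) : ℝ)⁻¹ • oddPrimeWeight p) ≠ 0 :=
    tprod_one_add_ne_zero_of_summable (fun p ↦ ne_of_gt <| add_pos_of_pos_of_nonneg one_pos <|
      mul_nonneg (by positivity) (oddPrimeWeight_nonneg p)) summable_inv_smul_oddPrimeWeight
  rw [twinConst, ← inv_inj, inv_inv, ← (hmul.hasProd.inv₀ hne).tprod_eq]
  exact tprod_congr fun p ↦ inv_one_add_inv_smul_oddPrimeWeight p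

theorem prod_primeFactors_two_mul {m : ℕ} (hm : m ≠ 0) :
    ∏ p ∈ (2 * m).primeFactors with 2 < p, (1 + 1 / ((p : ℝ) - 2)) =
      ∏ p ∈ m.primeFactors, (1 + oddPrimeWeight p) := by
  rw [Nat.primeFactors_mul two_ne_zero hm, Nat.prime_two.primeFactors, filter_union,
    filter_singleton, if_neg (lt_irrefl 2), empty_union, prod_filter]
  refine prod_congr rfl fun p _ ↦ ?_
  rw [oddPrimeWeight]
  split_ifs <;> simp

theorem S_eq_half_sum (z : ℝ) :
    S z = 2⁻¹ * ∑ m ∈ Ioc 0 ((⌈z⌉₊ - 1) / 2),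
      (m : ℝ)⁻¹ • ∏ p ∈ m.primeFactors, (1 + oddPrimeWeight p) := by
  have hrange : (range (⌈z⌉₊ + 1)).filter (fun h : ℕ ↦ 2 ∣ h ∧ 0 < h ∧ (h : ℝ) < z) =
      (Ioc 0 (⌈z⌉₊ - 1)).filter (2 ∣ ·) := by
    ext h
    simp only [mem_filter, mem_range, mem_Ioc, ← Nat.lt_ceil]
    omega
  rw [S, hrange, sum_Ioc_filter_dvd two_ne_zero, mul_sum]
  refine sum_congr rfl fun m hm ↦ ?_
  rw [prod_primeFactors_two_mul (mem_Ioc.1 hm).1.ne', Nat.cast_mul, one_div, mul_inv,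
    smul_eq_mul, mul_assoc, Nat.cast_two]

theorem tendsto_S_div_log : Tendsto (fun z ↦ S z / log z) atTop (𝓝 (1 / (2 * twinConst))) := by
  let M (z : ℝ) : ℕ := (⌈z⌉₊ - 1) / 2
  have hpred : Tendsto (fun z : ℝ ↦ ⌈z⌉₊ - 1) atTop atTop :=
    (tendsto_sub_atTop_nat 1).comp tendsto_nat_ceil_atTop
  have hM : Tendsto M atTop atTop := (Nat.tendsto_div_const_atTop two_ne_zero).comp hpred
  have hlogM : (fun z ↦ log (M z)) ~[atTop] log :=
    ((isEquivalent_log_natCast_div two_ne_zero).comp_tendsto hpred).trans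
      isEquivalent_log_natCeil_sub_one
  have hratio : Tendsto (fun z ↦ log (M z) / log z) atTop (𝓝 1) :=
    (isEquivalent_iff_tendsto_one (tendsto_log_atTop.eventually_ne_atTop 0)).1 hlogM
  have hmean := (tendsto_logMean_prod_one_add summable_inv_smul_oddPrimeWeight).comp hM
  have hlim := (hmean.const_mul 2⁻¹).mul hratio
  rw [tprod_one_add_oddPrimeWeight, mul_one, ← mul_inv] at hlim
  rw [one_div]
  have hne : ∀ᶠ z in atTop, log (M z) ≠ 0 :=
    (tendsto_log_atTop.comp (tendsto_natCast_atTop_atTop.comp hM)).eventually_ne_atTop 0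
  refine hlim.congr' ?_
  filter_upwards [hne] with z hz
  rw [S_eq_half_sum, Function.comp_apply, smul_eq_mul]
  field_simp
  rfl

end TwinPrimes

/-- Banks–Shparlinski: `S(z) = (1 + o(1))·log z/(2𝔖)` as `z → ∞`. -/
theorem S_asymptotic :
    ∀ ε > (0 : ℝ), ∃ z₀ : ℝ, ∀ z ≥ z₀,
      |S z - Real.log z / (2 * twinConst)| ≤ ε * Real.log z := by
  intro ε hε
  have hclose : ∀ᶠ z in atTop, |S z / log z - 1 / (2 * twinConst)| < ε :=
    tendsto_S_div_log.eventually (Metric.ball_mem_nhds _ hε)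
  refine eventually_atTop.1 ?_
  filter_upwards [hclose, tendsto_log_atTop.eventually_gt_atTop 0] with z hz hlog
  calc |S z - log z / (2 * twinConst)|
      = |S z / log z - 1 / (2 * twinConst)| * log z := by
        rw [← abs_of_pos hlog, ← abs_mul, abs_of_pos hlog, sub_mul, div_mul_cancel₀ _ hlog.ne',
          one_div_mul_eq_div]
    _ ≤ ε * log z := by gcongr
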